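/- arXiv:1712.00505 — 7 statements merged into one kernel-verified Lean document; each statement's English description precedes it below -/
import Mathlib

section
/- The subgroup of SL(2,ℤ) generated by the three matrices [[1,0],[-2,1]], [[-1,2],[0,-1]] and -Id₂ equals the principal congruence subgroup of level 2, Γ(2) = { g ∈ SL(2,ℤ) : g ≡ Id₂ mod 2 }. -/
open Matrix CongruenceSubgroup

theorem sl_mul_val {A B : Matrix.SpecialLinearGroup (Fin 2) ℤ} {M N : Matrix (Fin 2) (Fin 2) ℤ}
    (hA : (A : Matrix (Fin 2) (Fin 2) ℤ) = M) (hB : (B : Matrix (Fin 2) (Fin 2) ℤ) = N) :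
    ((A * B : Matrix.SpecialLinearGroup (Fin 2) ℤ) : Matrix (Fin 2) (Fin 2) ℤ) = M * N := by
  subst hA hB; rfl

theorem gamma_two_aux (H : Subgroup (Matrix.SpecialLinearGroup (Fin 2) ℤ))
    (L T N : Matrix.SpecialLinearGroup (Fin 2) ℤ)
    (hL : L ∈ H) (hT : T ∈ H) (hN : N ∈ H)
    (eL : (L : Matrix (Fin 2) (Fin 2) ℤ) = !![1, 0; -2, 1])
    (eT : T = ModularGroup.T ^ (2 : ℤ))
    (eN : (N : Matrix (Fin 2) (Fin 2) ℤ) = !![-1, 0; 0, -1]) :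
    ∀ (n : ℕ) (g : Matrix.SpecialLinearGroup (Fin 2) ℤ) (a b c d : ℤ),
      (g : Matrix (Fin 2) (Fin 2) ℤ) = !![a, b; c, d] → a % 2 = 1 → b % 2 = 0 → c % 2 = 0 →
      d % 2 = 1 → a.natAbs + c.natAbs = n → g ∈ H := by
  have eT' : (T : Matrix (Fin 2) (Fin 2) ℤ) = !![1, 2; 0, 1] := by
    rw [eT, ModularGroup.coe_T_zpow]
  have eTi : ((T⁻¹ : Matrix.SpecialLinearGroup (Fin 2) ℤ) : Matrix (Fin 2) (Fin 2) ℤ)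
      = !![1, -2; 0, 1] := by
    rw [eT, ← _root_.zpow_neg, ModularGroup.coe_T_zpow]
  have eLi : ((L⁻¹ : Matrix.SpecialLinearGroup (Fin 2) ℤ) : Matrix (Fin 2) (Fin 2) ℤ)
      = !![1, 0; 2, 1] := by
    refine (Matrix.SpecialLinearGroup.coe_inv L).trans ?_
    refine (congrArg adjugate eL).trans ?_
    rw [adjugate_fin_two_of]; simp
  intro n
  induction n using Nat.strong_induction_on with
  | _ n ih =>
  intro g a b c d hg ha hb hc hd hn
  have hdet : a * d - b * c = 1 := by
    have := g.det_coe
    rwa [hg, det_fin_two_of] at this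
  by_cases hc0 : c = 0
  · subst hc0
    have had : a * d = 1 := by linarith
    have key : ∀ b : ℤ, b % 2 = 0 → ModularGroup.T ^ b ∈ H := by
      intro b hb
      obtain ⟨k, rfl⟩ : ∃ k, b = 2 * k := ⟨b / 2, by omega⟩
      rw [_root_.zpow_mul, ← eT]
      exact H.zpow_mem hT k
    rcases Int.eq_one_or_neg_one_of_mul_eq_one' had with ⟨rfl, rfl⟩ | ⟨rfl, rfl⟩
    · have : g = ModularGroup.T ^ b := by
        apply Subtype.ext
        rw [hg, ModularGroup.coe_T_zpow]
      rw [this]; exact key b hb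
    · have : g = N * ModularGroup.T ^ (-b) := by
        apply Subtype.ext
        refine hg.trans ((sl_mul_val eN (ModularGroup.coe_T_zpow _)).trans ?_).symm
        simp
      rw [this]; exact H.mul_mem hN (key _ (by omega))
  · have step : ∀ (x : Matrix.SpecialLinearGroup (Fin 2) ℤ), x ∈ H → x * g ∈ H → g ∈ H :=
      fun x hx h => (H.mul_mem_cancel_left hx).1 h
    by_cases hlt : c.natAbs < a.natAbs
    · by_cases hs : (a + 2 * c).natAbs < a.natAbs
      · refine step T hT (ih _ ?_ (T * g) (a + 2 * c) (b + 2 * d) c d ?_ ?_ ?_ ?_ ?_ rfl)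
        all_goals first | omega | (refine (sl_mul_val eT' hg).trans ?_; simp)
      · refine step T⁻¹ (H.inv_mem hT)
          (ih _ ?_ (T⁻¹ * g) (a - 2 * c) (b - 2 * d) c d ?_ ?_ ?_ ?_ ?_ rfl)
        all_goals first | omega | (refine (sl_mul_val eTi hg).trans ?_; simp [sub_eq_add_neg])
    · by_cases hs : (c + 2 * a).natAbs < c.natAbs
      · refine step L⁻¹ (H.inv_mem hL)
          (ih _ ?_ (L⁻¹ * g) a b (c + 2 * a) (d + 2 * b) ?_ ?_ ?_ ?_ ?_ rfl)
        all_goals first | omega | (refine (sl_mul_val eLi hg).trans ?_; simp [add_comm])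
      · refine step L hL
          (ih _ ?_ (L * g) a b (c - 2 * a) (d - 2 * b) ?_ ?_ ?_ ?_ ?_ rfl)
        all_goals first
          | omega
          | (refine (sl_mul_val eL hg).trans ?_; simp [sub_eq_add_neg, add_comm])

theorem stmt2 :
    Subgroup.closure
      ({⟨!![1, 0; -2, 1], by norm_num [Matrix.det_fin_two_of]⟩,
        ⟨!![-1, 2; 0, -1], by norm_num [Matrix.det_fin_two_of]⟩,
        ⟨!![-1, 0; 0, -1], by norm_num [Matrix.det_fin_two_of]⟩} :
        Set (Matrix.SpecialLinearGroup (Fin 2) ℤ)) = Gamma 2 := by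
  apply le_antisymm
  · rw [Subgroup.closure_le]
    rintro x (rfl | rfl | rfl) <;> refine Gamma_mem.2 ⟨?_, ?_, ?_, ?_⟩ <;> decide
  · intro g hg
    rw [Gamma_mem] at hg
    obtain ⟨h1, h2, h3, h4⟩ := hg
    have e0 : ∀ z : ℤ, (z : ZMod 2) = 0 → z % 2 = 0 := fun z hz => by
      have := (ZMod.intCast_zmod_eq_zero_iff_dvd z 2).1 hz
      omega
    have e1 : ∀ z : ℤ, (z : ZMod 2) = 1 → z % 2 = 1 := fun z hz => by
      have := e0 (z - 1) (by push_cast; rw [hz]; simp)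
      omega
    have mL := Subgroup.subset_closure (G := Matrix.SpecialLinearGroup (Fin 2) ℤ)
      (k := {⟨!![1, 0; -2, 1], by norm_num [Matrix.det_fin_two_of]⟩,
        ⟨!![-1, 2; 0, -1], by norm_num [Matrix.det_fin_two_of]⟩,
        ⟨!![-1, 0; 0, -1], by norm_num [Matrix.det_fin_two_of]⟩}) (Or.inl rfl)
    have mB := Subgroup.subset_closure (G := Matrix.SpecialLinearGroup (Fin 2) ℤ)
      (k := {⟨!![1, 0; -2, 1], by norm_num [Matrix.det_fin_two_of]⟩,
        ⟨!![-1, 2; 0, -1], by norm_num [Matrix.det_fin_two_of]⟩,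
        ⟨!![-1, 0; 0, -1], by norm_num [Matrix.det_fin_two_of]⟩}) (Or.inr (Or.inl rfl))
    have mN := Subgroup.subset_closure (G := Matrix.SpecialLinearGroup (Fin 2) ℤ)
      (k := {⟨!![1, 0; -2, 1], by norm_num [Matrix.det_fin_two_of]⟩,
        ⟨!![-1, 2; 0, -1], by norm_num [Matrix.det_fin_two_of]⟩,
        ⟨!![-1, 0; 0, -1], by norm_num [Matrix.det_fin_two_of]⟩}) (Or.inr (Or.inr rfl))
    refine gamma_two_aux _ _ _ _ mL (Subgroup.inv_mem _ (Subgroup.mul_mem _ mN mB)) mN rfl ?_ rfl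
      _ g (g 0 0) (g 0 1) (g 1 0) (g 1 1) (eta_fin_two _) (e1 _ h1) (e0 _ h2) (e0 _ h3)
      (e1 _ h4) rfl
    rw [inv_eq_iff_eq_inv, ← _root_.zpow_neg]
    apply Subtype.ext
    refine ((sl_mul_val rfl rfl).trans ?_).trans (ModularGroup.coe_T_zpow _).symm
    simp
end

section
/- Let M₁₀ = [[1,-2πi,0,0],[0,1,0,0],[0,0,1,-2πi],[0,0,0,1]] and let M₁∞ be the inverse of the matrix [[1,0,2πi,0],[0,-1,-2,0],[0,0,1,-2πi],[0,0,0,-1]]. Then the rank of the 4×4 complex matrix M₁₀·M₁∞ − Id₄ equals 2; in particular M₁₀·M₁∞ is not a pseudo-reflection. -/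
open Complex Matrix

noncomputable def M10 : Matrix (Fin 4) (Fin 4) ℂ :=
  !![1, -2 * (Real.pi : ℂ) * I, 0, 0;
     0, 1, 0, 0;
     0, 0, 1, -2 * (Real.pi : ℂ) * I;
     0, 0, 0, 1]

noncomputable def M1inf : Matrix (Fin 4) (Fin 4) ℂ :=
  (!![1, 0, 2 * (Real.pi : ℂ) * I, 0;
      0, -1, -2, 0;
      0, 0, 1, -2 * (Real.pi : ℂ) * I;
      0, 0, 0, -1])⁻¹

theorem stmt6 : (M10 * M1inf - 1).rank = 2 := by
  unfold M1inf
  set N : Matrix (Fin 4) (Fin 4) ℂ := !![1, 0, 2 * (Real.pi : ℂ) * I, 0;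
      0, -1, -2, 0;
      0, 0, 1, -2 * (Real.pi : ℂ) * I;
      0, 0, 0, -1] with hN
  have hdet : N.det = 1 := by
    rw [hN]
    simp [Matrix.det_succ_row_zero, Fin.sum_univ_succ, Fin.succAbove]
  have hu : IsUnit N.det := by rw [hdet]; exact isUnit_one
  have hu' : IsUnit (N⁻¹).det := by
    rw [Matrix.isUnit_nonsing_inv_det_iff]; exact hu
  have h1 : M10 * N⁻¹ - 1 = (M10 - N) * N⁻¹ := by
    rw [Matrix.sub_mul, Matrix.mul_nonsing_inv _ hu]
  rw [h1, Matrix.rank_mul_eq_left_of_isUnit_det _ _ hu']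
  have h2 : M10 - N = !![-2 * (Real.pi : ℂ) * I, 0; 2, 0; 0, 0; 0, 2] *
      (!![0, 1, 1, 0; 0, 0, 0, 1] : Matrix (Fin 2) (Fin 4) ℂ) := by
    rw [hN]
    unfold M10
    ext i j
    fin_cases i <;> fin_cases j <;> simp [Matrix.mul_apply, Fin.sum_univ_succ] <;> norm_num
  have h3 : (!![0, 1/2, 0, 0; 0, 0, 0, 1/2] : Matrix (Fin 2) (Fin 4) ℂ) * (M10 - N) *
      (!![0, 0; 1, 0; 0, 0; 0, 1] : Matrix (Fin 4) (Fin 2) ℂ) = 1 := by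
    rw [h2]
    ext i j
    fin_cases i <;> fin_cases j <;> simp [Matrix.mul_apply, Fin.sum_univ_succ]
  apply le_antisymm
  · rw [h2]
    refine (Matrix.rank_mul_le_left _ _).trans ?_
    simpa using Matrix.rank_le_width
      (!![-2 * (Real.pi : ℂ) * I, 0; 2, 0; 0, 0; 0, 2] : Matrix (Fin 4) (Fin 2) ℂ)
  · have h4 := congrArg Matrix.rank h3
    rw [Matrix.rank_one, Fintype.card_fin] at h4
    rw [← h4]
    exact (Matrix.rank_mul_le_left _ _).trans (Matrix.rank_mul_le_right _ _)
end

section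
/- Let M₁₀ = [[1,-2πi,0,0],[0,1,0,0],[0,0,1,-2πi],[0,0,0,1]] and let M₁∞ be the inverse of the matrix [[1,0,2πi,0],[0,-1,-2,0],[0,0,1,-2πi],[0,0,0,-1]]. Then the rank of (M₁₀·M₁∞)² − Id₄ equals 1; i.e., (M₁₀·M₁∞)² is a pseudo-reflection. -/
open Complex Matrix

theorem M1inf_eq : M1inf = !![1, 0, -(2 * (Real.pi : ℂ) * I), (2 * (Real.pi : ℂ) * I) ^ 2;
      0, -1, -2, 2 * (2 * (Real.pi : ℂ) * I);
      0, 0, 1, -(2 * (Real.pi : ℂ) * I);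
      0, 0, 0, -1] := by
  unfold M1inf
  apply Matrix.inv_eq_right_inv
  ext i j
  fin_cases i <;> fin_cases j <;> simp [Matrix.mul_apply, Fin.sum_univ_four] <;> ring

theorem prod_eq : M10 * M1inf =
    !![1, 2 * (Real.pi : ℂ) * I, 2 * (Real.pi : ℂ) * I, -(2 * (Real.pi : ℂ) * I) ^ 2;
      0, -1, -2, 2 * (2 * (Real.pi : ℂ) * I);
      0, 0, 1, 0;
      0, 0, 0, -1] := by
  rw [M1inf_eq, M10]
  ext i j
  fin_cases i <;> fin_cases j <;> simp [Matrix.mul_apply, Fin.sum_univ_four] <;> ring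

theorem key_eq : (M10 * M1inf) ^ 2 - 1 =
    Matrix.vecMulVec ![2 * (2 * (Real.pi : ℂ) * I) ^ 2, -4 * (2 * (Real.pi : ℂ) * I), 0, 0]
      ![0, 0, 0, 1] := by
  rw [prod_eq, pow_two]
  ext i j
  fin_cases i <;> fin_cases j <;>
    simp [Matrix.mul_apply, Fin.sum_univ_four, Matrix.vecMulVec_apply] <;> ring

theorem stmt7 : ((M10 * M1inf) ^ 2 - 1).rank = 1 := by
  rw [key_eq]
  apply le_antisymm (Matrix.rank_vecMulVec_le _ _)
  rw [Nat.one_le_iff_ne_zero]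
  intro h
  rw [Matrix.rank, Submodule.finrank_eq_zero, LinearMap.range_eq_bot] at h
  have h1 := congrFun (LinearMap.congr_fun h ![0, 0, 0, 1]) 1
  simp [Matrix.mulVec, dotProduct, Fin.sum_univ_four, Matrix.vecMulVec_apply, Real.pi_ne_zero] at h1
end

section
/- Let M₁₀ = [[1,-2πi,0,0],[0,1,0,0],[0,0,1,-2πi],[0,0,0,1]], M₂₀ = [[1,0,-2πi,0],[0,1,0,-2πi],[0,0,1,0],[0,0,0,1]], M₁∞ = inverse of [[1,0,2πi,0],[0,-1,-2,0],[0,0,1,-2πi],[0,0,0,-1]], and M₂∞ = inverse of [[1,2πi,0,0],[0,1,0,-2πi],[0,-2,-1,0],[0,0,0,-1]], acting on row vectors a ∈ ℂ⁴ from the right by a ↦ a·M. Then the following subspaces of ℂ⁴ are invariant under all four generators: the 1-dimensional subspace spanned by (0,0,0,1); the 2-dimensional subspace spanned by (0,1,1,0) and (0,0,0,1); and the 3-dimensional subspace spanned by (0,1,1,0), (0,1,-1,0) and (0,0,0,1). In particular the monodromy representation is reducible. -/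
open Complex Matrix

noncomputable def M20 : Matrix (Fin 4) (Fin 4) ℂ :=
  !![1, 0, -2 * (Real.pi : ℂ) * I, 0;
     0, 1, 0, -2 * (Real.pi : ℂ) * I;
     0, 0, 1, 0;
     0, 0, 0, 1]

noncomputable def M2inf : Matrix (Fin 4) (Fin 4) ℂ :=
  (!![1, 2 * (Real.pi : ℂ) * I, 0, 0;
      0, 1, 0, -2 * (Real.pi : ℂ) * I;
      0, -2, -1, 0;
      0, 0, 0, -1])⁻¹

noncomputable def V1 : Submodule ℂ (Fin 4 → ℂ) :=
  Submodule.span ℂ {![0, 0, 0, 1]}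

noncomputable def V2 : Submodule ℂ (Fin 4 → ℂ) :=
  Submodule.span ℂ {![0, 1, 1, 0], ![0, 0, 0, 1]}

noncomputable def V3 : Submodule ℂ (Fin 4 → ℂ) :=
  Submodule.span ℂ {![0, 1, 1, 0], ![0, 1, -1, 0], ![0, 0, 0, 1]}

theorem memV1 (a : Fin 4 → ℂ) : a ∈ V1 ↔ a 0 = 0 ∧ a 1 = 0 ∧ a 2 = 0 := by
  rw [V1, Submodule.mem_span_singleton]
  constructor
  · rintro ⟨c, rfl⟩
    simp
  · rintro ⟨h0, h1, h2⟩
    refine ⟨a 3, ?_⟩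
    ext i
    fin_cases i <;> simp [h0, h1, h2]

theorem memV2 (a : Fin 4 → ℂ) : a ∈ V2 ↔ a 0 = 0 ∧ a 1 = a 2 := by
  rw [V2, Submodule.mem_span_pair]
  constructor
  · rintro ⟨c, d, rfl⟩
    simp
  · rintro ⟨h0, h1⟩
    refine ⟨a 2, a 3, ?_⟩
    ext i
    fin_cases i <;> simp [h0, h1]

theorem memV3 (a : Fin 4 → ℂ) : a ∈ V3 ↔ a 0 = 0 := by
  rw [V3, Submodule.mem_span_triple]
  constructor
  · rintro ⟨c, d, e, rfl⟩
    simp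
  · intro h0
    refine ⟨(a 1 + a 2) / 2, (a 1 - a 2) / 2, a 3, ?_⟩
    ext i
    fin_cases i <;> simp [h0] <;> ring

theorem M2inf_eq : M2inf = !![1, -(2 * (Real.pi : ℂ) * I), 0, (2 * (Real.pi : ℂ) * I) ^ 2;
      0, 1, 0, -(2 * (Real.pi : ℂ) * I);
      0, -2, -1, 2 * (2 * (Real.pi : ℂ) * I);
      0, 0, 0, -1] := by
  rw [M2inf]
  apply Matrix.inv_eq_left_inv
  ext i j
  fin_cases i <;> fin_cases j <;> simp [Matrix.mul_apply, Fin.sum_univ_four] <;> ring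

theorem stmt10 :
    ∀ M ∈ ({M10, M20, M1inf, M2inf} : Set (Matrix (Fin 4) (Fin 4) ℂ)),
      (∀ a ∈ V1, Matrix.vecMul a M ∈ V1) ∧
      (∀ a ∈ V2, Matrix.vecMul a M ∈ V2) ∧
      (∀ a ∈ V3, Matrix.vecMul a M ∈ V3) := by
  simp only [memV1, memV2, memV3]
  intro M hM
  simp only [Set.mem_insert_iff, Set.mem_singleton_iff] at hM
  rcases hM with rfl | rfl | rfl | rfl
  · refine ⟨?_, ?_, ?_⟩
    all_goals
      intro a h
      simp [M10, Matrix.vecMul, dotProduct, Fin.sum_univ_four, h]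
  · refine ⟨?_, ?_, ?_⟩
    all_goals
      intro a h
      simp [M20, Matrix.vecMul, dotProduct, Fin.sum_univ_four, h]
  · rw [M1inf_eq]
    refine ⟨?_, ?_, ?_⟩
    all_goals
      intro a h
      simp [Matrix.vecMul, dotProduct, Fin.sum_univ_four, h]
    all_goals ring
  · rw [M2inf_eq]
    refine ⟨?_, ?_, ?_⟩
    all_goals
      intro a h
      simp [Matrix.vecMul, dotProduct, Fin.sum_univ_four, h]
    all_goals ring
end

section
/- Let M₁₀, M₂₀, M₁∞, M₂∞ be the 4×4 complex matrices M₁₀ = [[1,-2πi,0,0],[0,1,0,0],[0,0,1,-2πi],[0,0,0,1]], M₂₀ = [[1,0,-2πi,0],[0,1,0,-2πi],[0,0,1,0],[0,0,0,1]], M₁∞ = inverse of [[1,0,2πi,0],[0,-1,-2,0],[0,0,1,-2πi],[0,0,0,-1]], M₂∞ = inverse of [[1,2πi,0,0],[0,1,0,-2πi],[0,-2,-1,0],[0,0,0,-1]], let G = [[0,-2,0,2],[2,0,-2,0],[0,2,0,-2],[-2,0,2,0]], and let R = (1/2)·[[√2,0,√2,0],[-i,-1,i,-1],[-i,1,i,1],[0,-√2,0,√2]].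 Then √-1·G is a Hermitian quadratic invariant of the conjugated monodromy group: for each M among the four generators, writing M^R = R⁻¹·M·R, one has conj(M^R)ᵀ·(√-1·G)·M^R = √-1·G. -/
open Complex Matrix

def Gmat : Matrix (Fin 4) (Fin 4) ℂ :=
  !![0, -2, 0, 2;
     2, 0, -2, 0;
     0, 2, 0, -2;
     -2, 0, 2, 0]

noncomputable def Rmat : Matrix (Fin 4) (Fin 4) ℂ :=
  (1 / 2 : ℂ) • !![(Real.sqrt 2 : ℂ), 0, (Real.sqrt 2 : ℂ), 0;
                   -I, -1, I, -1;
                   -I, 1, I, 1;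
                   0, -(Real.sqrt 2 : ℂ), 0, (Real.sqrt 2 : ℂ)]

/-- The invariant form before conjugation by the unitary matrix `Rmat`. -/
noncomputable def Kmat : Matrix (Fin 4) (Fin 4) ℂ :=
  (2 * (Real.sqrt 2 : ℂ)) • !![0, 0, 0, 0;
     0, 0, 0, 1;
     0, 0, 0, 1;
     0, 1, 1, 0]

lemma sqrt_two_sq : (Real.sqrt 2 : ℂ) ^ 2 = 2 := by
  rw [← Complex.ofReal_pow, Real.sq_sqrt (by norm_num)]
  norm_num

lemma conj_two : (starRingEnd ℂ) 2 = 2 := Complex.conj_ofNat 2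

lemma Rmat_unitary : Rmat * Rmatᴴ = 1 := by
  have hs := sqrt_two_sq
  have hI := Complex.I_sq
  ext a b
  fin_cases a <;> fin_cases b <;>
    simp [Rmat, Matrix.mul_apply, Fin.sum_univ_four, conj_two] <;> grind

lemma Rmat_form : Rmat * (I • Gmat) = Kmat * Rmat := by
  have hs := sqrt_two_sq
  have hI := Complex.I_sq
  ext a b
  fin_cases a <;> fin_cases b <;>
    simp [Rmat, Gmat, Kmat, Matrix.mul_apply, Fin.sum_univ_four, conj_two] <;> grind

lemma conj_invariant (M : Matrix (Fin 4) (Fin 4) ℂ) (h : Mᴴ * Kmat * M = Kmat) :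
    (Rmat⁻¹ * M * Rmat).conjTranspose * (I • Gmat) * (Rmat⁻¹ * M * Rmat) = I • Gmat := by
  have hR := Rmat_unitary
  have hR' : Rmatᴴ * Rmat = 1 := mul_eq_one_comm.mp hR
  have hG : I • Gmat = Rmatᴴ * Kmat * Rmat := by
    rw [Matrix.mul_assoc, ← Rmat_form, ← Matrix.mul_assoc, hR', Matrix.one_mul]
  rw [Matrix.inv_eq_right_inv hR, hG]
  simp only [conjTranspose_mul, conjTranspose_conjTranspose]
  calc _ = Rmatᴴ * (Mᴴ * (Rmat * Rmatᴴ) * Kmat * (Rmat * Rmatᴴ) * M) * Rmat := by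
        simp only [Matrix.mul_assoc]
    _ = _ := by rw [hR, Matrix.mul_one, Matrix.mul_one, h]

lemma inv_invariant (N : Matrix (Fin 4) (Fin 4) ℂ) (hN : IsUnit N.det)
    (h : Nᴴ * Kmat * N = Kmat) : (N⁻¹)ᴴ * Kmat * N⁻¹ = Kmat := by
  have h1 : N * N⁻¹ = 1 := Matrix.mul_nonsing_inv N hN
  have h2 : (N⁻¹)ᴴ * Nᴴ = 1 := by rw [← conjTranspose_mul, h1, conjTranspose_one]
  calc _ = (N⁻¹)ᴴ * (Nᴴ * Kmat * N) * N⁻¹ := by rw [h]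
    _ = ((N⁻¹)ᴴ * Nᴴ) * Kmat * (N * N⁻¹) := by simp only [Matrix.mul_assoc]
    _ = Kmat := by rw [h1, h2, Matrix.one_mul, Matrix.mul_one]

theorem stmt12 :
    ∀ M ∈ ({M10, M20, M1inf, M2inf} : Set (Matrix (Fin 4) (Fin 4) ℂ)),
      (Rmat⁻¹ * M * Rmat).conjTranspose * (I • Gmat) * (Rmat⁻¹ * M * Rmat)
        = I • Gmat := by
  intro M hM
  apply conj_invariant
  simp only [Set.mem_insert_iff, Set.mem_singleton_iff] at hM
  rcases hM with rfl | rfl | rfl | rfl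
  · ext a b
    fin_cases a <;> fin_cases b <;>
      simp [M10, Kmat, Matrix.mul_apply, Fin.sum_univ_four, conj_two] <;> ring
  · ext a b
    fin_cases a <;> fin_cases b <;>
      simp [M20, Kmat, Matrix.mul_apply, Fin.sum_univ_four, conj_two] <;> ring
  · apply inv_invariant
    · simp [Matrix.det_succ_row_zero, Fin.sum_univ_succ, Fin.succAbove]
    · ext a b
      fin_cases a <;> fin_cases b <;>
        simp [Kmat, Matrix.mul_apply, Fin.sum_univ_four, conj_two] <;> ring
  · apply inv_invariant
    · simp [Matrix.det_succ_row_zero, Fin.sum_univ_succ, Fin.succAbove]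
    · ext a b
      fin_cases a <;> fin_cases b <;>
        simp [Kmat, Matrix.mul_apply, Fin.sum_univ_four, conj_two] <;> ring
end

section
/- Let a, b be real numbers, α = e^{2πia}, β = e^{2πib} (so conj(α) = α⁻¹, conj(β) = β⁻¹). Let ρ(γ₁) = [[1,0,0,0],[1,α,0,0],[0,0,1,0],[0,0,1,α]], ρ(γ₂) = [[1,0,0,0],[0,1,0,0],[1,0,β,0],[0,1,0,β]], ρ(γ₃) = [[1,-1-α,-1-β,1-αβ],[0,1,0,0],[0,0,1,0],[0,0,0,1]], and let H̃ be the 4×4 matrix with rows V₁ = (0, i(1+α), i(1+β), i(-1+αβ)), V₂ = (-i(1+α⁻¹), -iα⁻¹(-1+α²), i(α⁻¹-β), -iβ(-1+α)(1-(αβ)⁻¹)), V₃ = (-i(1+β⁻¹), -i(α-β⁻¹), -iβ⁻¹(-1+β²), -iα(-1+β)(1-(αβ)⁻¹)), V₄ = (1-(αβ)⁻¹)·(i, i(-1+α), i(-1+β), i(-1+α)(-1+β)). Then H̃ is a Hermitian quadratic invariant of the representation: conj(ρ(γⱼ))ᵀ·H̃·ρ(γⱼ) = H̃ for j = 1, 2,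 3. -/
open Matrix Complex

theorem stmt15 (a b : ℝ)
    (α β : ℂ)
    (hα : α = Complex.exp (2 * Real.pi * I * a))
    (hβ : β = Complex.exp (2 * Real.pi * I * b)) :
    let ρ₁ : Matrix (Fin 4) (Fin 4) ℂ :=
      !![1, 0, 0, 0;
         1, α, 0, 0;
         0, 0, 1, 0;
         0, 0, 1, α]
    let ρ₂ : Matrix (Fin 4) (Fin 4) ℂ :=
      !![1, 0, 0, 0;
         0, 1, 0, 0;
         1, 0, β, 0;
         0, 1, 0, β]
    let ρ₃ : Matrix (Fin 4) (Fin 4) ℂ :=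
      !![1, -1 - α, -1 - β, 1 - α * β;
         0, 1, 0, 0;
         0, 0, 1, 0;
         0, 0, 0, 1]
    let Htilde : Matrix (Fin 4) (Fin 4) ℂ :=
      !![0, I * (1 + α), I * (1 + β), I * (-1 + α * β);
         -I * (1 + α⁻¹), -I * α⁻¹ * (-1 + α ^ 2), I * (α⁻¹ - β),
           -I * β * (-1 + α) * (1 - (α * β)⁻¹);
         -I * (1 + β⁻¹), -I * (α - β⁻¹), -I * β⁻¹ * (-1 + β ^ 2),
           -I * α * (-1 + β) * (1 - (α * β)⁻¹);
         (1 - (α * β)⁻¹) * I, (1 - (α * β)⁻¹) * (I * (-1 + α)),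
           (1 - (α * β)⁻¹) * (I * (-1 + β)),
           (1 - (α * β)⁻¹) * (I * (-1 + α) * (-1 + β))]
    ρ₁.conjTranspose * Htilde * ρ₁ = Htilde ∧
      ρ₂.conjTranspose * Htilde * ρ₂ = Htilde ∧
      ρ₃.conjTranspose * Htilde * ρ₃ = Htilde := by
  have hα0 : α ≠ 0 := by rw [hα]; exact Complex.exp_ne_zero _
  have hβ0 : β ≠ 0 := by rw [hβ]; exact Complex.exp_ne_zero _
  have hcα : (starRingEnd ℂ) α = α⁻¹ := by
    rw [hα, ← Complex.exp_conj, ← Complex.exp_neg]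
    simp [Complex.conj_ofNat]
  have hcβ : (starRingEnd ℂ) β = β⁻¹ := by
    rw [hβ, ← Complex.exp_conj, ← Complex.exp_neg]
    simp [Complex.conj_ofNat]
  clear hα hβ
  intro ρ₁ ρ₂ ρ₃ Htilde
  refine ⟨?_, ?_, ?_⟩
  · ext i j
    fin_cases i <;> fin_cases j <;>
      simp [ρ₁, Htilde, Matrix.mul_apply, Fin.sum_univ_four, hcα] <;>
      field_simp <;> ring
  · ext i j
    fin_cases i <;> fin_cases j <;>
      simp [ρ₂, Htilde, Matrix.mul_apply, Fin.sum_univ_four, hcβ] <;>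
      field_simp <;> ring
  · ext i j
    fin_cases i <;> fin_cases j <;>
      simp [ρ₃, Htilde, Matrix.mul_apply, Fin.sum_univ_four, hcα, hcβ] <;>
      field_simp <;> ring
end

section
/- Let H̃₀ = [[0,2i√2,2i√2,0],[-2i√2,0,0,0],[-2i√2,0,0,0],[0,0,0,0]], G = [[0,-2,0,2],[2,0,-2,0],[0,2,0,-2],[-2,0,2,0]], and R₀ = (1/√2)·[[i,0,-i,0],[0,-(1+i)/√2,0,-(1-i)/√2],[0,(1-i)/√2,0,(1+i)/√2],[1,0,1,0]]. Then R₀ is unitary, i.e. conj(R₀)ᵀ·R₀ = Id₄, and conj(R₀)ᵀ·H̃₀·R₀ = √-1·G. Consequently √-1·G is a Hermitian quadratic invariant of the conjugated Picard–Lefschetz monodromy representation ⟨ρ₀(γ₁)^{R₀}, ρ₀(γ₂)^{R₀}, ρ₀(γ₃)^{R₀}⟩, where ρ₀(γ₁) = [[1,0,0,0],[1,1,0,0],[0,0,1,0],[0,0,1,1]], ρ₀(γ₂) = [[1,0,0,0],[0,1,0,0],[1,0,1,0],[0,1,0,1]], ρ₀(γ₃) = [[1,-2,-2,0],[0,1,0,0],[0,0,1,0],[0,0,0,1]],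 and A^B = B⁻¹·A·B. -/
open Matrix Complex

def rho1 : Matrix (Fin 4) (Fin 4) ℂ :=
  !![1, 0, 0, 0;
     1, 1, 0, 0;
     0, 0, 1, 0;
     0, 0, 1, 1]

def rho2 : Matrix (Fin 4) (Fin 4) ℂ :=
  !![1, 0, 0, 0;
     0, 1, 0, 0;
     1, 0, 1, 0;
     0, 1, 0, 1]

def rho3 : Matrix (Fin 4) (Fin 4) ℂ :=
  !![1, -2, -2, 0;
     0, 1, 0, 0;
     0, 0, 1, 0;
     0, 0, 0, 1]

noncomputable def Htilde0 : Matrix (Fin 4) (Fin 4) ℂ :=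
  !![0, 2 * I * (Real.sqrt 2 : ℂ), 2 * I * (Real.sqrt 2 : ℂ), 0;
     -2 * I * (Real.sqrt 2 : ℂ), 0, 0, 0;
     -2 * I * (Real.sqrt 2 : ℂ), 0, 0, 0;
     0, 0, 0, 0]

noncomputable def R0 : Matrix (Fin 4) (Fin 4) ℂ :=
  (1 / (Real.sqrt 2 : ℂ)) •
    !![I, 0, -I, 0;
       0, -(1 + I) / (Real.sqrt 2 : ℂ), 0, -(1 - I) / (Real.sqrt 2 : ℂ);
       0, (1 - I) / (Real.sqrt 2 : ℂ), 0, (1 + I) / (Real.sqrt 2 : ℂ);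
       1, 0, 1, 0]

lemma sqrt_two_inv_mul : ((Real.sqrt 2 : ℂ))⁻¹ * ((Real.sqrt 2 : ℂ))⁻¹ = 1 / 2 := by
  rw [← mul_inv, ← Complex.ofReal_mul, Real.mul_self_sqrt (by norm_num)]
  norm_num

lemma sqrt_two_mul : (Real.sqrt 2 : ℂ) * (Real.sqrt 2 : ℂ) = 2 := by
  rw [← Complex.ofReal_mul, Real.mul_self_sqrt (by norm_num)]
  norm_num

/-- `R0` with the nested square roots multiplied out. -/
lemma R0_eq : R0 =
    !![I * (Real.sqrt 2 : ℂ) / 2, 0, -I * (Real.sqrt 2 : ℂ) / 2, 0;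
       0, -(1 + I) / 2, 0, -(1 - I) / 2;
       0, (1 - I) / 2, 0, (1 + I) / 2;
       (Real.sqrt 2 : ℂ) / 2, 0, (Real.sqrt 2 : ℂ) / 2, 0] := by
  have h := sqrt_two_inv_mul
  have h1 := sqrt_two_mul
  have h2 : ((Real.sqrt 2 : ℂ))⁻¹ = (Real.sqrt 2 : ℂ) / 2 := by
    have : (Real.sqrt 2 : ℂ) ≠ 0 := by
      intro h0; rw [h0] at h1; norm_num at h1
    field_simp
    linear_combination -h1
  unfold R0
  ext i j
  fin_cases i <;> fin_cases j <;>
    simp [div_eq_mul_inv, h2] <;> grind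

lemma R0_conjTranspose_eq : R0.conjTranspose =
    !![-I * (Real.sqrt 2 : ℂ) / 2, 0, 0, (Real.sqrt 2 : ℂ) / 2;
       0, -(1 - I) / 2, (1 + I) / 2, 0;
       I * (Real.sqrt 2 : ℂ) / 2, 0, 0, (Real.sqrt 2 : ℂ) / 2;
       0, -(1 + I) / 2, (1 - I) / 2, 0] := by
  rw [R0_eq]
  ext i j
  fin_cases i <;> fin_cases j <;>
    simp [conjTranspose_apply, Complex.conj_ofReal] <;> ring

lemma R0_unitary : R0.conjTranspose * R0 = 1 := by
  have h1 := sqrt_two_mul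
  have h2 := I_mul_I
  rw [R0_conjTranspose_eq, R0_eq]
  ext i j
  fin_cases i <;> fin_cases j <;>
    simp [Matrix.mul_apply, Fin.sum_univ_four] <;> grind

lemma R0_form : R0.conjTranspose * Htilde0 * R0 = I • Gmat := by
  have h1 := sqrt_two_mul
  have h2 := I_mul_I
  rw [R0_conjTranspose_eq, R0_eq, Htilde0, Gmat]
  ext i j
  fin_cases i <;> fin_cases j <;>
    simp [Matrix.mul_apply, Fin.sum_univ_four] <;> grind

lemma rho_form (ρ : Matrix (Fin 4) (Fin 4) ℂ)
    (hρ : ρ ∈ ({rho1, rho2, rho3} : Set (Matrix (Fin 4) (Fin 4) ℂ))) :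
    ρ.conjTranspose * Htilde0 * ρ = Htilde0 := by
  have hc : (starRingEnd ℂ) 2 = 2 := map_ofNat _ 2
  rcases hρ with rfl | rfl | rfl <;> ext i j <;> fin_cases i <;> fin_cases j <;>
    simp [Matrix.mul_apply, Fin.sum_univ_four, rho1, rho2, rho3, Htilde0, hc] <;> ring

theorem stmt17 :
    R0.conjTranspose * R0 = 1 ∧
    R0.conjTranspose * Htilde0 * R0 = I • Gmat ∧
    (∀ ρ ∈ ({rho1, rho2, rho3} : Set (Matrix (Fin 4) (Fin 4) ℂ)),
      (R0⁻¹ * ρ * R0).conjTranspose * (I • Gmat) * (R0⁻¹ * ρ * R0) = I • Gmat) := by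
  refine ⟨R0_unitary, R0_form, fun ρ hρ => ?_⟩
  have hinv : R0⁻¹ = R0.conjTranspose := Matrix.inv_eq_left_inv R0_unitary
  have hR : R0 * R0.conjTranspose = 1 := mul_eq_one_comm.mp R0_unitary
  rw [hinv, ← R0_form]
  simp only [conjTranspose_mul, conjTranspose_conjTranspose]
  calc R0.conjTranspose * (ρ.conjTranspose * R0) * (R0.conjTranspose * Htilde0 * R0) *
        (R0.conjTranspose * ρ * R0)
      = R0.conjTranspose * (ρ.conjTranspose * (R0 * R0.conjTranspose) * Htilde0 *
        (R0 * R0.conjTranspose) * ρ) * R0 := by simp only [Matrix.mul_assoc]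
    _ = R0.conjTranspose * Htilde0 * R0 := by
        rw [hR, Matrix.mul_one, Matrix.mul_one, rho_form ρ hρ]
end
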